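/- Data processing inequality for relative entropy under quantum measurement (finite dimensions): let ρ, σ be density matrices on ℂ^d with supp(ρ) ⊆ supp(σ), and let (M_y)_{y∈Y} be a finite POVM (M_y ⪰ 0, Σ_y M_y = I). Define classical distributions P(y) = tr(ρ M_y), P'(y) = tr(σ M_y). Then D(P‖P') ≤ D(ρ‖σ), where D(ρ‖σ) = tr ρ(log ρ − log σ). -/

import Mathlib

open scoped Matrix BigOperators ComplexOrder

variable {d : ℕ}

/-- Matrix logarithm of a Hermitian matrix via its spectral decomposition. -/
noncomputable def hermLog {A : Matrix (Fin d) (Fin d) ℂ} (hA : A.IsHermitian) :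
    Matrix (Fin d) (Fin d) ℂ :=
  (hA.eigenvectorUnitary : Matrix (Fin d) (Fin d) ℂ) *
    Matrix.diagonal (fun i => (Real.log (hA.eigenvalues i) : ℂ)) *
    star (hA.eigenvectorUnitary : Matrix (Fin d) (Fin d) ℂ)

/-- Quantum relative entropy `D(ρ‖σ) = tr ρ(log ρ − log σ)`. -/
noncomputable def qRelEntropy {ρ σ : Matrix (Fin d) (Fin d) ℂ}
    (hρ : ρ.IsHermitian) (hσ : σ.IsHermitian) : ℝ :=
  (Matrix.trace (ρ * (hermLog hρ - hermLog hσ))).re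

/-!
For nonnegative `p`, `q` (with `p = 0` whenever `q = 0`),
`p log (p / q) - (p - q) = ∫₀¹ (1 - s) (p - q)² / ((1 - s) q + s p) ds`,
and `∑ (p - q)` equals `tr ρ - tr σ` for all pairs of distributions below. So it suffices to prove,
for each `0 < s < 1`, the data processing inequality for the skewed `χ²`-divergence
`∑ (p - q)² / ((1 - s) q + s p)`. The quantum relative entropy itself is the classical relative
entropy of the Nussbaum–Szkoła distributions `(i, j) ↦ pᵢ |⟨uᵢ, vⱼ⟩|²` and
`(i, j) ↦ qⱼ |⟨uᵢ, vⱼ⟩|²`, where `ρ = ∑ pᵢ uᵢ uᵢᴴ` and `σ = ∑ qⱼ vⱼ vⱼᴴ`. Put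
`τ = (1 - s) σ + s ρ`. Both `χ²`-divergences are compared with `2 tr (ρ - σ) X - tr τ X²` for the
Hermitian `X = ∑ c_y M_y`, where `c_y = tr ((ρ - σ) M_y) / tr (τ M_y)`: it dominates the measured
divergence because `X² ≤ ∑ c_y² M_y`, and it is at most the Nussbaum–Szkoła one by completing the
square in every entry `⟨uᵢ, X vⱼ⟩`.
-/

open Set

section ClassicalEntropy

/-- A primitive in `s` of `(1 - s) (p - q)² / ((1 - s) q + s p)`; its increment over `[0, 1]` is
the summand `p log (p / q) - (p - q)` of the classical relative entropy. -/
noncomputable def entropyPrimitive (p q s : ℝ) : ℝ :=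
  p * Real.log ((1 - s) * q + s * p) - s * (p - q)

lemma entropyPrimitive_one_sub_zero {p q : ℝ} (hpq : q = 0 → p = 0) :
    entropyPrimitive p q 1 - entropyPrimitive p q 0 = p * Real.log (p / q) - (p - q) := by
  rcases eq_or_ne p 0 with rfl | hp
  · simp [entropyPrimitive]
  · rw [Real.log_div hp (mt hpq hp)]
    simp only [entropyPrimitive, sub_self, zero_mul, one_mul, zero_add, sub_zero, add_zero]
    ring

lemma one_sub_mul_add_mul_pos {p q s : ℝ} (hp : 0 ≤ p) (hq : 0 < q) (hs : 0 ≤ s) (hs' : s < 1) :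
    0 < (1 - s) * q + s * p :=
  add_pos_of_pos_of_nonneg (mul_pos (sub_pos.2 hs') hq) (mul_nonneg hs hp)

lemma continuousOn_entropyPrimitive {p q : ℝ} (hp : 0 ≤ p) (hq : 0 ≤ q) (hpq : q = 0 → p = 0) :
    ContinuousOn (entropyPrimitive p q) (Icc 0 1) := by
  unfold entropyPrimitive
  rcases hp.eq_or_lt with rfl | hp
  · simp only [zero_mul]
    fun_prop
  · have hq : 0 < q := hq.lt_of_ne' (mt hpq hp.ne')
    refine (continuousOn_const.mul (ContinuousOn.log (by fun_prop) fun s hs => ?_)).sub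
      (by fun_prop)
    rcases hs.2.eq_or_lt with rfl | hs'
    · simpa using hp.ne'
    · exact (one_sub_mul_add_mul_pos hp.le hq hs.1 hs').ne'

lemma hasDerivAt_entropyPrimitive {p q s : ℝ} (hp : 0 ≤ p) (hq : 0 ≤ q) (hpq : q = 0 → p = 0)
    (hs : s ∈ Ioo (0 : ℝ) 1) :
    HasDerivAt (entropyPrimitive p q) ((1 - s) * ((p - q) ^ 2 / ((1 - s) * q + s * p))) s := by
  rcases hq.eq_or_lt with rfl | hq
  · obtain rfl := hpq rfl
    have hzero : entropyPrimitive 0 0 = fun _ => 0 := by ext; simp [entropyPrimitive]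
    simpa [hzero] using hasDerivAt_const s (0 : ℝ)
  · have hm : (1 - s) * q + s * p ≠ 0 := (one_sub_mul_add_mul_pos hp hq hs.1.le hs.2).ne'
    have hmix : HasDerivAt (fun t : ℝ => (1 - t) * q + t * p) (p - q) s :=
      ((((hasDerivAt_id s).const_sub 1).mul_const q).add
        ((hasDerivAt_id s).mul_const p)).congr_deriv (by ring)
    refine (((hmix.log hm).const_mul p).sub
      ((hasDerivAt_id s).mul_const (p - q))).congr_deriv ?_
    generalize hmdef : (1 - s) * q + s * p = m at hm ⊢
    field_simp
    linear_combination (p - q) * hmdef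

variable {ι κ : Type*}

/-- Nonnegative weights `a`, `b` with `a` absolutely continuous with respect to `b`. -/
structure AbsContWeights (a b : ι → ℝ) : Prop where
  nonneg_left : ∀ i, 0 ≤ a i
  nonneg_right : ∀ i, 0 ≤ b i
  eq_zero : ∀ i, b i = 0 → a i = 0

variable [Fintype ι] [Fintype κ]

/-- The `χ²`-divergence of `a` from `b`, with the denominator skewed to `(1 - s) b + s a`.
A summand with vanishing denominator counts as `0`. -/
noncomputable def skewChiSq (a b : ι → ℝ) (s : ℝ) : ℝ :=
  ∑ i, (a i - b i) ^ 2 / ((1 - s) * b i + s * a i)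

lemma AbsContWeights.continuousOn_sum_entropyPrimitive {a b : ι → ℝ} (h : AbsContWeights a b) :
    ContinuousOn (fun s => ∑ i, entropyPrimitive (a i) (b i) s) (Icc 0 1) :=
  continuousOn_finsetSum _ fun i _ =>
    continuousOn_entropyPrimitive (h.nonneg_left i) (h.nonneg_right i) (h.eq_zero i)

lemma AbsContWeights.hasDerivAt_sum_entropyPrimitive {a b : ι → ℝ} (h : AbsContWeights a b)
    {s : ℝ} (hs : s ∈ Ioo (0 : ℝ) 1) :
    HasDerivAt (fun s => ∑ i, entropyPrimitive (a i) (b i) s) ((1 - s) * skewChiSq a b s) s := by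
  rw [skewChiSq, Finset.mul_sum]
  exact HasDerivAt.fun_sum fun i _ =>
    hasDerivAt_entropyPrimitive (h.nonneg_left i) (h.nonneg_right i) (h.eq_zero i) hs

lemma AbsContWeights.sum_entropyPrimitive_one_sub_zero {a b : ι → ℝ} (h : AbsContWeights a b) :
    ∑ i, entropyPrimitive (a i) (b i) 1 - ∑ i, entropyPrimitive (a i) (b i) 0 =
      ∑ i, a i * Real.log (a i / b i) - (∑ i, a i - ∑ i, b i) := by
  simp only [← Finset.sum_sub_distrib, entropyPrimitive_one_sub_zero (h.eq_zero _)]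

theorem AbsContWeights.sum_mul_log_div_le_of_skewChiSq_le {a b : ι → ℝ} {a' b' : κ → ℝ}
    (h : AbsContWeights a b) (h' : AbsContWeights a' b')
    (hsum : ∑ i, a i - ∑ i, b i = ∑ k, a' k - ∑ k, b' k)
    (hle : ∀ s ∈ Ioo (0 : ℝ) 1, skewChiSq a b s ≤ skewChiSq a' b' s) :
    ∑ i, a i * Real.log (a i / b i) ≤ ∑ k, a' k * Real.log (a' k / b' k) := by
  have hmono : MonotoneOn (fun s => ∑ k, entropyPrimitive (a' k) (b' k) s -
      ∑ i, entropyPrimitive (a i) (b i) s) (Icc 0 1) := by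
    refine monotoneOn_of_hasDerivWithinAt_nonneg (convex_Icc 0 1)
      (h'.continuousOn_sum_entropyPrimitive.sub h.continuousOn_sum_entropyPrimitive)
      (f' := fun s => (1 - s) * skewChiSq a' b' s - (1 - s) * skewChiSq a b s) ?_ ?_
    all_goals
      intro s hs
      rw [interior_Icc] at hs
    · exact ((h'.hasDerivAt_sum_entropyPrimitive hs).sub
        (h.hasDerivAt_sum_entropyPrimitive hs)).hasDerivWithinAt
    · exact sub_nonneg.2 (mul_le_mul_of_nonneg_left (hle s hs) (sub_nonneg.2 hs.2.le))
  have hends := hmono (left_mem_Icc.2 zero_le_one) (right_mem_Icc.2 zero_le_one) zero_le_one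
  simp only at hends
  linarith [h.sum_entropyPrimitive_one_sub_zero, h'.sum_entropyPrimitive_one_sub_zero]

end ClassicalEntropy

section PosSemidefTrace

variable {n Y 𝕜 : Type*} [RCLike 𝕜]

lemma isHermitian_sum_smul [Fintype Y] {M : Y → Matrix n n 𝕜} (hM : ∀ y, (M y).IsHermitian)
    (c : Y → ℝ) : (∑ y, c y • M y).IsHermitian :=
  isSelfAdjoint_sum _ fun y _ => (IsSelfAdjoint.all (c y)).smul (hM y).isSelfAdjoint

variable [Fintype n]

lemma exists_eq_conjTranspose_mul_self {A : Matrix n n 𝕜} (hA : A.PosSemidef) :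
    ∃ C : Matrix n n 𝕜, A = Cᴴ * C := by
  classical
  open scoped MatrixOrder Matrix.Norms.L2Operator in
  exact CStarAlgebra.nonneg_iff_eq_star_mul_self.1 hA.nonneg

lemma trace_mul_nonneg_of_posSemidef {A B : Matrix n n 𝕜} (hA : A.PosSemidef)
    (hB : B.PosSemidef) : 0 ≤ (A * B).trace := by
  classical
  obtain ⟨C, rfl⟩ := exists_eq_conjTranspose_mul_self hA
  rw [Matrix.mul_assoc, Matrix.trace_mul_comm]
  exact (hB.mul_mul_conjTranspose_same C).trace_nonneg

lemma mul_eq_zero_of_trace_mul_eq_zero {A B : Matrix n n 𝕜} (hA : A.PosSemidef)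
    (hB : B.PosSemidef) (h : (A * B).trace = 0) : A * B = 0 := by
  obtain ⟨C, rfl⟩ := exists_eq_conjTranspose_mul_self hA
  obtain ⟨E, rfl⟩ := exists_eq_conjTranspose_mul_self hB
  have htr : ((C * Eᴴ)ᴴ * (C * Eᴴ)).trace = 0 := by
    rw [← h, Matrix.conjTranspose_mul, Matrix.conjTranspose_conjTranspose, Matrix.mul_assoc,
      Matrix.trace_mul_comm]
    simp only [Matrix.mul_assoc]
  have hCE : C * Eᴴ = 0 := Matrix.trace_conjTranspose_mul_self_eq_zero_iff.1 htr
  calc Cᴴ * C * (Eᴴ * E) = Cᴴ * (C * Eᴴ) * E := by simp only [Matrix.mul_assoc]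
    _ = 0 := by rw [hCE, Matrix.mul_zero, Matrix.zero_mul]

/-- The gap is `∑ (c_y - X) M_y (c_y - X)` with `X = ∑ c_y M_y`. -/
lemma posSemidef_sum_sq_smul_sub_sq [DecidableEq n] [Fintype Y] {M : Y → Matrix n n 𝕜}
    (hM : ∀ y, (M y).PosSemidef) (hsum : ∑ y, M y = 1) (c : Y → ℝ) :
    (∑ y, c y ^ 2 • M y - (∑ y, c y • M y) * ∑ y, c y • M y).PosSemidef := by
  have hX := isHermitian_sum_smul (fun y => (hM y).1) c
  set X := ∑ y, c y • M y with hXdef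
  have hterm (y : Y) : (c y • 1 - X) * M y * (c y • 1 - X)ᴴ =
      c y ^ 2 • M y - X * (c y • M y) - (c y • M y) * X + X * M y * X := by
    rw [Matrix.conjTranspose_sub, hX.eq, Matrix.conjTranspose_smul, Matrix.conjTranspose_one,
      star_trivial]
    simp only [sub_mul, mul_sub, smul_mul_assoc, mul_smul_comm, one_mul, mul_one, pow_two,
      mul_smul, smul_sub]
    abel
  have hgap : ∑ y, (c y • 1 - X) * M y * (c y • 1 - X)ᴴ = ∑ y, c y ^ 2 • M y - X * X := by
    simp only [hterm, Finset.sum_add_distrib, Finset.sum_sub_distrib, ← Finset.mul_sum,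
      ← Finset.sum_mul, hsum, ← hXdef, mul_one]
    abel
  rw [← hgap]
  exact Matrix.posSemidef_sum _ fun y _ => (hM y).mul_mul_conjTranspose_same _

lemma mul_eq_zero_of_ker_le {R m : Type*} [NonUnitalNonAssocSemiring R] {A B : Matrix n n R}
    (hker : ∀ v, B *ᵥ v = 0 → A *ᵥ v = 0) {C : Matrix n m R} (h : B * C = 0) : A * C = 0 :=
  Matrix.ext fun i j => congrFun (hker (fun k => C k j) (funext fun l => congrFun₂ h l j)) i

end PosSemidefTrace

section EigenbasisExpansion

variable {n 𝕜 : Type*} [Fintype n] [DecidableEq n] [RCLike 𝕜] {A B : Matrix n n 𝕜}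

/-- The matrix `⟨uᵢ, X vⱼ⟩` of `X` from the eigenbasis `v` of `B` to the eigenbasis `u` of `A`. -/
noncomputable def eigenbasisMatrix (hA : A.IsHermitian) (hB : B.IsHermitian)
    (X : Matrix n n 𝕜) : Matrix n n 𝕜 :=
  star (hA.eigenvectorUnitary : Matrix n n 𝕜) * X * (hB.eigenvectorUnitary : Matrix n n 𝕜)

lemma eigenbasisMatrix_sub (hA : A.IsHermitian) (hB : B.IsHermitian) (X Z : Matrix n n 𝕜) :
    eigenbasisMatrix hA hB (X - Z) = eigenbasisMatrix hA hB X - eigenbasisMatrix hA hB Z := by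
  simp only [eigenbasisMatrix, mul_sub, sub_mul]

lemma eigenbasisMatrix_cfc_mul (hA : A.IsHermitian) (hB : B.IsHermitian) (f : ℝ → ℝ)
    (X : Matrix n n 𝕜) (i j : n) :
    eigenbasisMatrix hA hB (cfc f A * X) i j =
      f (hA.eigenvalues i) • eigenbasisMatrix hA hB X i j := by
  have hcfc : star (hA.eigenvectorUnitary : Matrix n n 𝕜) * cfc f A =
      Matrix.diagonal (RCLike.ofReal ∘ f ∘ hA.eigenvalues) *
        star (hA.eigenvectorUnitary : Matrix n n 𝕜) := by
    rw [hA.cfc_eq, Matrix.IsHermitian.cfc, Unitary.conjStarAlgAut_apply, ← Matrix.mul_assoc,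
      ← Matrix.mul_assoc, Unitary.coe_star_mul_self, Matrix.one_mul]
  rw [eigenbasisMatrix, ← Matrix.mul_assoc, hcfc, Matrix.mul_assoc, Matrix.mul_assoc,
    Matrix.diagonal_mul, RCLike.real_smul_eq_coe_mul, eigenbasisMatrix, Matrix.mul_assoc]
  rfl

lemma eigenbasisMatrix_mul_cfc (hA : A.IsHermitian) (hB : B.IsHermitian) (f : ℝ → ℝ)
    (X : Matrix n n 𝕜) (i j : n) :
    eigenbasisMatrix hA hB (X * cfc f B) i j =
      f (hB.eigenvalues j) • eigenbasisMatrix hA hB X i j := by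
  have hcfc : cfc f B * (hB.eigenvectorUnitary : Matrix n n 𝕜) =
      (hB.eigenvectorUnitary : Matrix n n 𝕜) *
        Matrix.diagonal (RCLike.ofReal ∘ f ∘ hB.eigenvalues) := by
    rw [hB.cfc_eq, Matrix.IsHermitian.cfc, Unitary.conjStarAlgAut_apply, Matrix.mul_assoc,
      Unitary.coe_star_mul_self, Matrix.mul_one]
  rw [eigenbasisMatrix, Matrix.mul_assoc, Matrix.mul_assoc, hcfc, ← Matrix.mul_assoc,
    ← Matrix.mul_assoc, Matrix.mul_diagonal, RCLike.real_smul_eq_coe_mul, mul_comm]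
  rfl

lemma eigenbasisMatrix_self_mul (hA : A.IsHermitian) (hB : B.IsHermitian) (X : Matrix n n 𝕜)
    (i j : n) :
    eigenbasisMatrix hA hB (A * X) i j = hA.eigenvalues i • eigenbasisMatrix hA hB X i j := by
  simpa only [cfc_id ℝ A hA.isSelfAdjoint, id_eq] using eigenbasisMatrix_cfc_mul hA hB id X i j

lemma eigenbasisMatrix_mul_self (hA : A.IsHermitian) (hB : B.IsHermitian) (X : Matrix n n 𝕜)
    (i j : n) :
    eigenbasisMatrix hA hB (X * B) i j = hB.eigenvalues j • eigenbasisMatrix hA hB X i j := by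
  simpa only [cfc_id ℝ B hB.isSelfAdjoint, id_eq] using eigenbasisMatrix_mul_cfc hA hB id X i j

lemma trace_mul_conjTranspose_eq_sum (hA : A.IsHermitian) (hB : B.IsHermitian)
    (X Z : Matrix n n 𝕜) :
    (X * Zᴴ).trace = ∑ ij : n × n,
      eigenbasisMatrix hA hB X ij.1 ij.2 * star (eigenbasisMatrix hA hB Z ij.1 ij.2) := by
  have hU : (hA.eigenvectorUnitary : Matrix n n 𝕜) * star (hA.eigenvectorUnitary : Matrix n n 𝕜)
      = 1 := Unitary.coe_mul_star_self _
  have hV : (hB.eigenvectorUnitary : Matrix n n 𝕜) * star (hB.eigenvectorUnitary : Matrix n n 𝕜)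
      = 1 := Unitary.coe_mul_star_self _
  have hinv : (X * Zᴴ).trace =
      (eigenbasisMatrix hA hB X * (eigenbasisMatrix hA hB Z)ᴴ).trace := by
    simp only [eigenbasisMatrix, Matrix.star_eq_conjTranspose, Matrix.conjTranspose_mul,
      Matrix.conjTranspose_conjTranspose, Matrix.mul_assoc] at hU hV ⊢
    rw [← Matrix.mul_assoc _ _ (Zᴴ * _), hV, Matrix.one_mul,
      Matrix.trace_mul_comm _ (X * _), Matrix.mul_assoc, Matrix.mul_assoc, hU, Matrix.mul_one]
  rw [hinv, Fintype.sum_prod_type]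
  rfl

lemma eigenvalue_mul_eigenbasisMatrix_one_eq_zero (hA : A.IsHermitian) (hB : B.IsHermitian)
    (hker : ∀ v, B *ᵥ v = 0 → A *ᵥ v = 0) {i j : n} (hj : hB.eigenvalues j = 0) :
    hA.eigenvalues i * ‖eigenbasisMatrix hA hB 1 i j‖ ^ 2 = 0 := by
  have hAv : A *ᵥ ⇑(hB.eigenvectorBasis j) = 0 :=
    hker _ (by rw [hB.mulVec_eigenvectorBasis, hj, zero_smul])
  have hzero : eigenbasisMatrix hA hB (A * 1) i j = 0 := by
    rw [eigenbasisMatrix, Matrix.mul_one, Matrix.mul_assoc, Matrix.mul_apply]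
    exact Finset.sum_eq_zero fun k _ => mul_eq_zero_of_right _ (congrFun hAv k)
  rw [eigenbasisMatrix_self_mul, smul_eq_zero] at hzero
  rcases hzero with h | h <;> simp [h]

end EigenbasisExpansion

section QuantumRelativeEntropy

variable {n Y : Type*} [Fintype n] {ρ σ : Matrix n n ℂ}

/-- The weights `tr (ρ M_y)` of the outcomes of the measurement `M` in the state `ρ`
(Born's rule). -/
def bornWeights (ρ : Matrix n n ℂ) (M : Y → Matrix n n ℂ) (y : Y) : ℝ :=
  (ρ * M y).trace.re

lemma absContWeights_bornWeights {M : Y → Matrix n n ℂ} (hρ : ρ.PosSemidef) (hσ : σ.PosSemidef)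
    (hker : ∀ v, σ *ᵥ v = 0 → ρ *ᵥ v = 0) (hM : ∀ y, (M y).PosSemidef) :
    AbsContWeights (bornWeights ρ M) (bornWeights σ M) where
  nonneg_left y := (Complex.nonneg_iff.1 (trace_mul_nonneg_of_posSemidef hρ (hM y))).1
  nonneg_right y := (Complex.nonneg_iff.1 (trace_mul_nonneg_of_posSemidef hσ (hM y))).1
  eq_zero y hy := by
    have hσM : (σ * M y).trace = 0 := Complex.ext hy
      (Complex.nonneg_iff.1 (trace_mul_nonneg_of_posSemidef hσ (hM y))).2.symm
    have hρM := mul_eq_zero_of_ker_le hker (mul_eq_zero_of_trace_mul_eq_zero hσ (hM y) hσM)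
    rw [bornWeights, hρM, Matrix.trace_zero, Complex.zero_re]

variable [DecidableEq n]

lemma sum_bornWeights [Fintype Y] {M : Y → Matrix n n ℂ} (hsum : ∑ y, M y = 1) :
    ∑ y, bornWeights ρ M y = ρ.trace.re := by
  simp only [bornWeights]
  rw [← Complex.re_sum, ← Matrix.trace_sum, ← Finset.mul_sum, hsum, mul_one]

/-- The first Nussbaum–Szkoła distribution `pᵢ |⟨uᵢ, vⱼ⟩|²` of a pair of Hermitian matrices with
eigenvalues `pᵢ`, `qⱼ` and eigenvectors `uᵢ`, `vⱼ`. -/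
noncomputable def nussbaumSzkolaLeft (hρ : ρ.IsHermitian) (hσ : σ.IsHermitian) (ij : n × n) : ℝ :=
  hρ.eigenvalues ij.1 * ‖eigenbasisMatrix hρ hσ 1 ij.1 ij.2‖ ^ 2

/-- The second Nussbaum–Szkoła distribution `qⱼ |⟨uᵢ, vⱼ⟩|²`; see `nussbaumSzkolaLeft`. -/
noncomputable def nussbaumSzkolaRight (hρ : ρ.IsHermitian) (hσ : σ.IsHermitian) (ij : n × n) : ℝ :=
  hσ.eigenvalues ij.2 * ‖eigenbasisMatrix hρ hσ 1 ij.1 ij.2‖ ^ 2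

lemma nussbaumSzkolaLeft_eq_zero (hρ : ρ.IsHermitian) (hσ : σ.IsHermitian)
    (hker : ∀ v, σ *ᵥ v = 0 → ρ *ᵥ v = 0) {ij : n × n}
    (h : nussbaumSzkolaRight hρ hσ ij = 0) : nussbaumSzkolaLeft hρ hσ ij = 0 := by
  rcases mul_eq_zero.1 h with hq | hw
  · exact eigenvalue_mul_eigenbasisMatrix_one_eq_zero hρ hσ hker hq
  · rw [nussbaumSzkolaLeft, hw, mul_zero]

lemma absContWeights_nussbaumSzkola (hρ : ρ.PosSemidef) (hσ : σ.PosSemidef)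
    (hker : ∀ v, σ *ᵥ v = 0 → ρ *ᵥ v = 0) :
    AbsContWeights (nussbaumSzkolaLeft hρ.1 hσ.1) (nussbaumSzkolaRight hρ.1 hσ.1) where
  nonneg_left ij := mul_nonneg (hρ.eigenvalues_nonneg ij.1) (sq_nonneg _)
  nonneg_right ij := mul_nonneg (hσ.eigenvalues_nonneg ij.2) (sq_nonneg _)
  eq_zero _ := nussbaumSzkolaLeft_eq_zero hρ.1 hσ.1 hker

lemma re_trace_left_mul_mul_conjTranspose (hρ : ρ.IsHermitian) (hσ : σ.IsHermitian)
    (X Z : Matrix n n ℂ) :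
    (ρ * (X * Zᴴ)).trace.re = ∑ ij : n × n, hρ.eigenvalues ij.1 *
      (eigenbasisMatrix hρ hσ X ij.1 ij.2 * star (eigenbasisMatrix hρ hσ Z ij.1 ij.2)).re := by
  simp only [← Matrix.mul_assoc, trace_mul_conjTranspose_eq_sum hρ hσ, eigenbasisMatrix_self_mul,
    Complex.re_sum, smul_mul_assoc, Complex.smul_re, smul_eq_mul]

lemma re_trace_right_mul_conjTranspose_mul (hρ : ρ.IsHermitian) (hσ : σ.IsHermitian)
    (X Z : Matrix n n ℂ) :
    (σ * (Zᴴ * X)).trace.re = ∑ ij : n × n, hσ.eigenvalues ij.2 *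
      (eigenbasisMatrix hρ hσ X ij.1 ij.2 * star (eigenbasisMatrix hρ hσ Z ij.1 ij.2)).re := by
  rw [← Matrix.mul_assoc, Matrix.trace_mul_comm, ← Matrix.mul_assoc]
  simp only [trace_mul_conjTranspose_eq_sum hρ hσ, eigenbasisMatrix_mul_self,
    Complex.re_sum, smul_mul_assoc, Complex.smul_re, smul_eq_mul]

lemma re_mul_star_self (z : ℂ) : (z * star z).re = ‖z‖ ^ 2 := by
  rw [Complex.star_def, Complex.mul_conj', ← Complex.ofReal_pow, Complex.ofReal_re]

lemma sum_nussbaumSzkolaLeft (hρ : ρ.IsHermitian) (hσ : σ.IsHermitian) :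
    ∑ ij, nussbaumSzkolaLeft hρ hσ ij = ρ.trace.re := by
  simpa only [nussbaumSzkolaLeft, re_mul_star_self, Matrix.conjTranspose_one, mul_one] using
    (re_trace_left_mul_mul_conjTranspose hρ hσ 1 1).symm

lemma sum_nussbaumSzkolaRight (hρ : ρ.IsHermitian) (hσ : σ.IsHermitian) :
    ∑ ij, nussbaumSzkolaRight hρ hσ ij = σ.trace.re := by
  simpa only [nussbaumSzkolaRight, re_mul_star_self, Matrix.conjTranspose_one, mul_one] using
    (re_trace_right_mul_conjTranspose_mul hρ hσ 1 1).symm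

lemma re_trace_mul_cfc_log_sub_cfc_log (hρ : ρ.IsHermitian) (hσ : σ.IsHermitian) :
    (ρ * (cfc Real.log ρ - cfc Real.log σ)).trace.re =
      ∑ ij, nussbaumSzkolaLeft hρ hσ ij *
        (Real.log (hρ.eigenvalues ij.1) - Real.log (hσ.eigenvalues ij.2)) := by
  have hlog (i j : n) : eigenbasisMatrix hρ hσ (cfc Real.log ρ - cfc Real.log σ) i j =
      (Real.log (hρ.eigenvalues i) - Real.log (hσ.eigenvalues j)) •
        eigenbasisMatrix hρ hσ 1 i j := by
    have hl := eigenbasisMatrix_cfc_mul hρ hσ Real.log 1 i j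
    have hr := eigenbasisMatrix_mul_cfc hρ hσ Real.log 1 i j
    rw [mul_one] at hl
    rw [one_mul] at hr
    rw [eigenbasisMatrix_sub, Matrix.sub_apply, hl, hr, sub_smul]
  have htr := re_trace_left_mul_mul_conjTranspose hρ hσ (cfc Real.log ρ - cfc Real.log σ) 1
  rw [Matrix.conjTranspose_one, mul_one] at htr
  rw [htr]
  refine Finset.sum_congr rfl fun ij _ => ?_
  rw [hlog, smul_mul_assoc, Complex.smul_re, re_mul_star_self, nussbaumSzkolaLeft, smul_eq_mul]
  ring

lemma hermLog_eq_cfc {A : Matrix (Fin d) (Fin d) ℂ} (hA : A.IsHermitian) :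
    hermLog hA = cfc Real.log A := by
  rw [hA.cfc_eq, Matrix.IsHermitian.cfc, Unitary.conjStarAlgAut_apply]
  rfl

theorem qRelEntropy_eq_sum_nussbaumSzkola {ρ σ : Matrix (Fin d) (Fin d) ℂ} (hρ : ρ.IsHermitian)
    (hσ : σ.IsHermitian) (hker : ∀ v, σ *ᵥ v = 0 → ρ *ᵥ v = 0) :
    qRelEntropy hρ hσ = ∑ ij, nussbaumSzkolaLeft hρ hσ ij *
      Real.log (nussbaumSzkolaLeft hρ hσ ij / nussbaumSzkolaRight hρ hσ ij) := by
  rw [qRelEntropy, hermLog_eq_cfc, hermLog_eq_cfc,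
    re_trace_mul_cfc_log_sub_cfc_log hρ hσ]
  refine Finset.sum_congr rfl fun ij _ => ?_
  rcases eq_or_ne (nussbaumSzkolaLeft hρ hσ ij) 0 with hL | hL
  · simp only [hL, zero_mul]
  · have hR := mt (nussbaumSzkolaLeft_eq_zero hρ hσ hker) hL
    rw [← Real.log_div (left_ne_zero_of_mul hL) (left_ne_zero_of_mul hR),
      nussbaumSzkolaLeft, nussbaumSzkolaRight, mul_div_mul_right _ _ (right_ne_zero_of_mul hL)]

end QuantumRelativeEntropy

section SkewChiSqDataProcessing

/-- Completing the square: `0 ≤ ‖m z - δ w‖²`. -/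
lemma two_mul_re_mul_star_sub_le_sq_div {m δ : ℝ} (hm : 0 ≤ m) (hδ : m = 0 → δ = 0) (z w : ℂ) :
    2 * (δ * (z * star w).re) - m * ‖z‖ ^ 2 ≤ (δ * ‖w‖ ^ 2) ^ 2 / (m * ‖w‖ ^ 2) := by
  rcases hm.eq_or_lt' with hm0 | hm
  · simp [hm0, hδ hm0]
  have hsq : 0 ≤ m ^ 2 * ‖z‖ ^ 2 + δ ^ 2 * ‖w‖ ^ 2 - 2 * (m * δ * (z * star w).re) := by
    have h := Complex.normSq_sub (m * z) (δ * w)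
    rw [map_mul (starRingEnd ℂ), Complex.conj_ofReal, mul_mul_mul_comm, ← Complex.ofReal_mul,
      Complex.re_ofReal_mul, Complex.normSq_mul, Complex.normSq_mul, Complex.normSq_ofReal,
      Complex.normSq_ofReal, Complex.normSq_eq_norm_sq z, Complex.normSq_eq_norm_sq w] at h
    rw [sq m, sq δ, Complex.star_def, ← h]
    exact Complex.normSq_nonneg _
  have hcancel : (δ * ‖w‖ ^ 2) ^ 2 / (m * ‖w‖ ^ 2) = δ ^ 2 * ‖w‖ ^ 2 / m := by
    rcases eq_or_ne ‖w‖ 0 with hw | hw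
    · simp [hw]
    · field_simp
  rw [hcancel, le_div_iff₀ hm]
  linarith

variable {n Y : Type*} [Fintype n] {ρ σ : Matrix n n ℂ}

lemma two_mul_re_trace_sub_eq_sum [DecidableEq n] (hρ : ρ.IsHermitian) (hσ : σ.IsHermitian)
    {X : Matrix n n ℂ} (hX : X.IsHermitian) (s : ℝ) :
    2 * ((ρ - σ) * X).trace.re - (((1 - s) • σ + s • ρ) * (X * X)).trace.re =
      ∑ ij : n × n, (2 * ((hρ.eigenvalues ij.1 - hσ.eigenvalues ij.2) *
          (eigenbasisMatrix hρ hσ X ij.1 ij.2 * star (eigenbasisMatrix hρ hσ 1 ij.1 ij.2)).re) -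
        ((1 - s) * hσ.eigenvalues ij.2 + s * hρ.eigenvalues ij.1) *
          ‖eigenbasisMatrix hρ hσ X ij.1 ij.2‖ ^ 2) := by
  have hρX := re_trace_left_mul_mul_conjTranspose hρ hσ X 1
  have hσX := re_trace_right_mul_conjTranspose_mul hρ hσ X 1
  have hρXX := re_trace_left_mul_mul_conjTranspose hρ hσ X X
  have hσXX := re_trace_right_mul_conjTranspose_mul hρ hσ X X
  simp only [Matrix.conjTranspose_one, mul_one, one_mul, hX.eq, re_mul_star_self]
    at hρX hσX hρXX hσXX
  calc 2 * ((ρ - σ) * X).trace.re - (((1 - s) • σ + s • ρ) * (X * X)).trace.re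
      = 2 * ((ρ * X).trace.re - (σ * X).trace.re) -
          ((1 - s) * (σ * (X * X)).trace.re + s * (ρ * (X * X)).trace.re) := by
        simp only [sub_mul, add_mul, smul_mul_assoc, Matrix.trace_sub, Matrix.trace_add,
          Matrix.trace_smul, Complex.sub_re, Complex.add_re, Complex.smul_re, smul_eq_mul]
    _ = _ := by
        rw [hρX, hσX, hρXX, hσXX]
        simp only [Finset.mul_sum, ← Finset.sum_sub_distrib, ← Finset.sum_add_distrib]
        exact Finset.sum_congr rfl fun ij _ => by ring

lemma two_mul_re_trace_sub_le_skewChiSq_nussbaumSzkola [DecidableEq n] (hρ : ρ.PosSemidef)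
    (hσ : σ.PosSemidef) {X : Matrix n n ℂ} (hX : X.IsHermitian) {s : ℝ}
    (hs : s ∈ Ioo (0 : ℝ) 1) :
    2 * ((ρ - σ) * X).trace.re - (((1 - s) • σ + s • ρ) * (X * X)).trace.re ≤
      skewChiSq (nussbaumSzkolaLeft hρ.1 hσ.1) (nussbaumSzkolaRight hρ.1 hσ.1) s := by
  rw [two_mul_re_trace_sub_eq_sum hρ.1 hσ.1 hX, skewChiSq]
  refine Finset.sum_le_sum fun ij _ => ?_
  simp only [nussbaumSzkolaLeft, nussbaumSzkolaRight, ← sub_mul, ← add_mul, ← mul_assoc (1 - s),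
    ← mul_assoc s]
  have hp : 0 ≤ s * hρ.1.eigenvalues ij.1 := mul_nonneg hs.1.le (hρ.eigenvalues_nonneg ij.1)
  have hq : 0 ≤ (1 - s) * hσ.1.eigenvalues ij.2 :=
    mul_nonneg (sub_nonneg.2 hs.2.le) (hσ.eigenvalues_nonneg ij.2)
  refine two_mul_re_mul_star_sub_le_sq_div (add_nonneg hq hp) (fun hm => ?_) _ _
  obtain ⟨hq0, hp0⟩ := (add_eq_zero_iff_of_nonneg hq hp).1 hm
  rw [(mul_eq_zero_iff_left hs.1.ne').1 hp0, (mul_eq_zero_iff_left (sub_pos.2 hs.2).ne').1 hq0,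
    sub_zero]

/-- The optimal `X` is `∑ c_y M_y` with `c_y = tr (Δ M_y) / tr (τ M_y)`. -/
lemma exists_isHermitian_sum_sq_div_le [Fintype Y] [DecidableEq n] {τ : Matrix n n ℂ}
    (hτ : τ.PosSemidef) (Δ : Matrix n n ℂ) {M : Y → Matrix n n ℂ} (hM : ∀ y, (M y).PosSemidef)
    (hsum : ∑ y, M y = 1) :
    ∃ X : Matrix n n ℂ, X.IsHermitian ∧
      ∑ y, bornWeights Δ M y ^ 2 / bornWeights τ M y ≤
        2 * (Δ * X).trace.re - (τ * (X * X)).trace.re := by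
  let c (y : Y) : ℝ := bornWeights Δ M y / bornWeights τ M y
  have hlin (A : Matrix n n ℂ) (f : Y → ℝ) :
      (A * ∑ y, f y • M y).trace.re = ∑ y, f y * bornWeights A M y := by
    simp only [Finset.mul_sum, mul_smul_comm, Matrix.trace_sum, Matrix.trace_smul, Complex.re_sum,
      Complex.smul_re, smul_eq_mul, bornWeights]
  refine ⟨∑ y, c y • M y, isHermitian_sum_smul (fun y => (hM y).1) c, ?_⟩
  have hgap := (Complex.nonneg_iff.1 (trace_mul_nonneg_of_posSemidef hτ
    (posSemidef_sum_sq_smul_sub_sq hM hsum c))).1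
  rw [mul_sub, Matrix.trace_sub, Complex.sub_re, hlin, sub_nonneg] at hgap
  have hc (y : Y) : bornWeights Δ M y ^ 2 / bornWeights τ M y =
      2 * (c y * bornWeights Δ M y) - c y ^ 2 * bornWeights τ M y := by
    rcases eq_or_ne (bornWeights τ M y) 0 with h0 | h0
    · simp [c, h0]
    · simp only [c]
      field_simp
      ring
  calc ∑ y, bornWeights Δ M y ^ 2 / bornWeights τ M y
      = 2 * (Δ * ∑ y, c y • M y).trace.re - ∑ y, c y ^ 2 * bornWeights τ M y := by
        rw [hlin, Finset.mul_sum, ← Finset.sum_sub_distrib]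
        exact Finset.sum_congr rfl fun y _ => hc y
    _ ≤ _ := sub_le_sub_left hgap _

theorem skewChiSq_bornWeights_le [Fintype Y] [DecidableEq n] (hρ : ρ.PosSemidef) (hσ : σ.PosSemidef)
    {M : Y → Matrix n n ℂ} (hM : ∀ y, (M y).PosSemidef) (hsum : ∑ y, M y = 1) {s : ℝ}
    (hs : s ∈ Ioo (0 : ℝ) 1) :
    skewChiSq (bornWeights ρ M) (bornWeights σ M) s ≤
      skewChiSq (nussbaumSzkolaLeft hρ.1 hσ.1) (nussbaumSzkolaRight hρ.1 hσ.1) s := by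
  have hτ : ((1 - s) • σ + s • ρ).PosSemidef :=
    (hσ.smul (sub_nonneg.2 hs.2.le)).add (hρ.smul hs.1.le)
  obtain ⟨X, hX, hle⟩ := exists_isHermitian_sum_sq_div_le hτ (ρ - σ) hM hsum
  calc skewChiSq (bornWeights ρ M) (bornWeights σ M) s
      = ∑ y, bornWeights (ρ - σ) M y ^ 2 / bornWeights ((1 - s) • σ + s • ρ) M y := by
        simp only [skewChiSq, bornWeights, sub_mul, add_mul, smul_mul_assoc, Matrix.trace_sub,
          Matrix.trace_add, Matrix.trace_smul, Complex.sub_re, Complex.add_re, Complex.smul_re,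
          smul_eq_mul]
    _ ≤ 2 * ((ρ - σ) * X).trace.re - (((1 - s) • σ + s • ρ) * (X * X)).trace.re := hle
    _ ≤ _ := two_mul_re_trace_sub_le_skewChiSq_nussbaumSzkola hρ hσ hX hs

end SkewChiSqDataProcessing

theorem measurement_data_processing_general {Y : Type*} [Fintype Y]
    (ρ σ : Matrix (Fin d) (Fin d) ℂ)
    (hρ : ρ.PosSemidef) (hσ : σ.PosSemidef)
    (hsupp : ∀ v : Fin d → ℂ, σ *ᵥ v = 0 → ρ *ᵥ v = 0)
    (M : Y → Matrix (Fin d) (Fin d) ℂ)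
    (hMpos : ∀ y, (M y).PosSemidef) (hMsum : ∑ y, M y = 1) :
    ∑ y, bornWeights ρ M y * Real.log (bornWeights ρ M y / bornWeights σ M y)
      ≤ qRelEntropy hρ.1 hσ.1 := by
  rw [qRelEntropy_eq_sum_nussbaumSzkola hρ.1 hσ.1 hsupp]
  refine (absContWeights_bornWeights hρ hσ hsupp hMpos).sum_mul_log_div_le_of_skewChiSq_le
    (absContWeights_nussbaumSzkola hρ hσ hsupp) ?_ fun s hs =>
      skewChiSq_bornWeights_le hρ hσ hMpos hMsum hs
  rw [sum_bornWeights hMsum, sum_bornWeights hMsum, sum_nussbaumSzkolaLeft,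
    sum_nussbaumSzkolaRight]

/-- Data processing inequality for relative entropy under a quantum measurement:
if `supp ρ ⊆ supp σ` and `(M y)` is a POVM, the classical relative entropy of the
measurement outcome distributions is bounded by the quantum relative entropy. -/
theorem measurement_data_processing {Y : Type*} [Fintype Y]
    (ρ σ : Matrix (Fin d) (Fin d) ℂ)
    (hρ : ρ.PosSemidef) (hσ : σ.PosSemidef)
    (hρtr : Matrix.trace ρ = 1) (hσtr : Matrix.trace σ = 1)
    (hsupp : ∀ v : Fin d → ℂ, σ *ᵥ v = 0 → ρ *ᵥ v = 0)
    (M : Y → Matrix (Fin d) (Fin d) ℂ)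
    (hMpos : ∀ y, (M y).PosSemidef) (hMsum : ∑ y, M y = 1) :
    ∑ y, (Matrix.trace (ρ * M y)).re *
        Real.log ((Matrix.trace (ρ * M y)).re / (Matrix.trace (σ * M y)).re)
      ≤ qRelEntropy hρ.1 hσ.1 :=
  measurement_data_processing_general ρ σ hρ hσ hsupp M hMpos hMsum
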